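/- Let L ≥ 4 be an even integer and let D ⊆ V_L be a set of vertices of the toric lattice of even cardinality. Let J ∈ F₂^{E_L} have minimum Hamming weight subject to ∂₁ J = 𝟙_D (such J exists since |D| is even). Then there exists a 2-chain c ∈ F₂^{P_L} such that J' = J + ∂₂ c satisfies: the Hamming weight of J' equals that of J, ∂₁ J' = 𝟙_D, and every vertex of D is an endpoint of exactly one edge in the support of J'. In particular, there is a minimum-weight solution of ∂₁ J = 𝟙_D in which every vertex of D is incident to exactly one edge of the support of J. -/

import Mathlib

/-- Vertices of the `L × L` toric lattice. -/
abbrev TV (L : ℕ) := ZMod L × ZMod L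

/-- Edge indices of the toric lattice: `((i,j), 0)` joins `(i,j)` and `(i+1,j)`;
`((i,j), 1)` joins `(i,j)` and `(i,j+1)`. -/
abbrev TE (L : ℕ) := (ZMod L × ZMod L) × Fin 2

/-- Plaquette indices of the toric lattice. -/
abbrev TP (L : ℕ) := ZMod L × ZMod L

/-- First endpoint of an edge. -/
def tEp1 {L : ℕ} (e : TE L) : TV L := e.1

/-- Second endpoint of an edge. -/
def tEp2 {L : ℕ} (e : TE L) : TV L :=
  if e.2 = 0 then (e.1.1 + 1, e.1.2) else (e.1.1, e.1.2 + 1)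

/-- Vertex–edge incidence matrix over `F₂`. -/
def tM1 (L : ℕ) : Matrix (TV L) (TE L) (ZMod 2) := fun v e =>
  if v = tEp1 e ∨ v = tEp2 e then 1 else 0

/-- Edge–plaquette incidence matrix over `F₂`: the plaquette `(i,j)` has the four
boundary edges `((i,j),0)`, `((i,j),1)`, `((i,j+1),0)`, `((i+1,j),1)`. -/
def tM2 (L : ℕ) : Matrix (TE L) (TP L) (ZMod 2) := fun e q =>
  if e = ((q.1, q.2), (0 : Fin 2)) ∨ e = ((q.1, q.2), (1 : Fin 2)) ∨
      e = ((q.1, q.2 + 1), (0 : Fin 2)) ∨ e = ((q.1 + 1, q.2), (1 : Fin 2))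
  then 1 else 0

/-- The boundary map `∂₁ : F₂^{E_L} → F₂^{V_L}`, sending the indicator of an edge to
the sum of the indicators of its two endpoints. -/
def tD1 (L : ℕ) [NeZero L] : (TE L → ZMod 2) →ₗ[ZMod 2] (TV L → ZMod 2) :=
  (tM1 L).mulVecLin

/-- The boundary map `∂₂ : F₂^{P_L} → F₂^{E_L}`, sending the indicator of a plaquette to
the sum of the indicators of its four boundary edges. -/
def tD2 (L : ℕ) [NeZero L] : (TP L → ZMod 2) →ₗ[ZMod 2] (TE L → ZMod 2) :=
  (tM2 L).mulVecLin

/-- The transpose `∂₁^* : F₂^{E_L} → F₂^{P_L}` of `∂₂`. -/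
def tD1s (L : ℕ) [NeZero L] : (TE L → ZMod 2) →ₗ[ZMod 2] (TP L → ZMod 2) :=
  (Matrix.transpose (tM2 L)).mulVecLin

/-- The transpose `∂₂^* : F₂^{V_L} → F₂^{E_L}` of `∂₁`. -/
def tD2s (L : ℕ) [NeZero L] : (TV L → ZMod 2) →ₗ[ZMod 2] (TE L → ZMod 2) :=
  (Matrix.transpose (tM1 L)).mulVecLin

/-- Hamming weight of an `F₂`-vector. -/
def wt {α : Type*} [Fintype α] (x : α → ZMod 2) : ℕ :=
  (Finset.univ.filter fun a => x a ≠ 0).card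

/-- Indicator vector of a finite set of coordinates. -/
def ind {α : Type*} [Fintype α] [DecidableEq α] (D : Finset α) : α → ZMod 2 :=
  fun a => if a ∈ D then 1 else 0

/-!
Among all chains homologous to `J`, choose one of least weight and, among those, with the fewest
defects, that is, vertices of `D` of degree `3`. Suppose it has a defect, and colour the torus as a
checkerboard with the defect black. Three edges at a black vertex `v` contain both edges of exactly
one of any two opposite corners at `v`, so one of two prescribed opposite plaquettes at `v` can be
flipped. The flip preserves the weight and transfers two units of degree from `v` to the black
vertex diagonally across; by minimality, that vertex is now a defect, and the argument repeats.

The number of flips of each plaquette is a height function, whose differences across the edges are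
determined by the initial and the current chain. As there are finitely many chains, some chain
recurs, and the flips in between have a constant, positive height: every plaquette is flipped.
The prescribed directions make each black vertex the target of some plaquette, so all black
vertices lie in `D` and have degree at least `1`, one of them even `3`. Every edge has exactly one
black endpoint, so the weight exceeds the number `L ^ 2 / 2` of black vertices. This is
impossible: on a Hamiltonian cycle of the torus, of length `L ^ 2`, there are two complementary
chains with boundary `𝟙_D`, and one of them has weight at most `L ^ 2 / 2`.
-/

section Bits

variable {α : Type*} [Fintype α]

/-- The sign `(-1) ^ x` of a bit `x`, which is the change of its value in `{0, 1}` when it is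
flipped. -/
def bitSign (x : ZMod 2) : ℤ := 1 - 2 * x.val

lemma wt_eq_sum_val (x : α → ZMod 2) : wt x = ∑ a, (x a).val := by
  have val_eq_ite : ∀ b : ZMod 2, (if b ≠ 0 then 1 else 0) = b.val := by decide
  simp only [wt, Finset.card_filter, val_eq_ite]

lemma wt_sum_smul_single_le [DecidableEq α] {ι : Type*} (s : Finset ι) (b : ι → ZMod 2)
    (a : ι → α) :
    wt (∑ k ∈ s, b k • Pi.single (a k) 1) ≤ (s.filter fun k => b k ≠ 0).card := by
  refine (Finset.card_le_card fun e he => ?_).trans (Finset.card_image_le (f := a))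
  rw [Finset.mem_filter_univ, Finset.sum_apply] at he
  obtain ⟨k, hk, hke⟩ := Finset.exists_ne_zero_of_sum_ne_zero he
  have hek : e = a k := by
    by_contra h
    simp [h] at hke
  refine Finset.mem_image.2 ⟨k, Finset.mem_filter.2 ⟨hk, fun h => ?_⟩, hek.symm⟩
  simp [h] at hke

variable [DecidableEq α]

lemma bitSign_add_ind (x : α → ZMod 2) (B : Finset α) (a : α) :
    bitSign ((x + ind B) a) = if a ∈ B then -bitSign (x a) else bitSign (x a) := by
  have bitSign_add_one : ∀ b : ZMod 2, bitSign (b + 1) = -bitSign b := by decide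
  by_cases ha : a ∈ B <;> simp [ind, ha, bitSign_add_one]

lemma sum_mul_val_add_ind (w : α → ℤ) (x : α → ZMod 2) (B : Finset α) :
    ∑ a, w a * ((x + ind B) a).val = ∑ a, w a * (x a).val + ∑ a ∈ B, w a * bitSign (x a) := by
  have val_add_one : ∀ b : ZMod 2, ((b + 1).val : ℤ) = b.val + bitSign b := by decide
  rw [← Fintype.sum_ite_mem B, ← Finset.sum_add_distrib]
  refine Finset.sum_congr rfl fun a _ => ?_
  by_cases ha : a ∈ B <;> simp [ind, ha, val_add_one, mul_add]

lemma wt_add_ind (x : α → ZMod 2) (B : Finset α) :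
    (wt (x + ind B) : ℤ) = wt x + ∑ a ∈ B, bitSign (x a) := by
  simpa [wt_eq_sum_val] using sum_mul_val_add_ind 1 x B

end Bits

section Incidence

variable {L : ℕ}

@[simp] lemma tEp1_mk (v : TV L) (k : Fin 2) : tEp1 (v, k) = v := rfl

@[simp] lemma tEp2_mk_zero (v : TV L) : tEp2 (v, 0) = (v.1 + 1, v.2) := rfl

@[simp] lemma tEp2_mk_one (v : TV L) : tEp2 (v, 1) = (v.1, v.2 + 1) := rfl

lemma tEp1_ne_tEp2 [Fact (1 < L)] (e : TE L) : tEp1 e ≠ tEp2 e := by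
  obtain ⟨⟨x, y⟩, k⟩ := e
  fin_cases k <;> simp

/-- The number of endpoints of the edge `e` equal to `v`. -/
def incidence (v : TV L) (e : TE L) : ℕ :=
  (Pi.single (tEp1 e) 1 + Pi.single (tEp2 e) 1 : TV L → ℕ) v

lemma incidence_eq_ite [Fact (1 < L)] (v : TV L) (e : TE L) :
    incidence v e = if v = tEp1 e ∨ v = tEp2 e then 1 else 0 := by
  have hne := tEp1_ne_tEp2 e
  simp only [incidence, Pi.add_apply, Pi.single_apply]
  grind

variable [NeZero L]

/-- The number of edges in the support of the chain `J` that are incident to `v`. -/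
def vertexDegree (J : TE L → ZMod 2) (v : TV L) : ℕ :=
  (Finset.univ.filter fun e : TE L => J e ≠ 0 ∧ (v = tEp1 e ∨ v = tEp2 e)).card

lemma sum_incidence_mul (f : TE L → ℕ) (v : TV L) :
    ∑ e, incidence v e * f e =
      f (v, 0) + f ((v.1 - 1, v.2), 0) + f (v, 1) + f ((v.1, v.2 - 1), 1) := by
  have right_iff (w : TV L) : v = (w.1 + 1, w.2) ↔ (v.1 - 1, v.2) = w := by
    simp only [Prod.ext_iff, sub_eq_iff_eq_add]
  have up_iff (w : TV L) : v = (w.1, w.2 + 1) ↔ (v.1, v.2 - 1) = w := by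
    simp only [Prod.ext_iff, sub_eq_iff_eq_add]
  rw [Fintype.sum_prod_type]
  simp only [incidence, Pi.add_apply, Fin.sum_univ_two, tEp1_mk, tEp2_mk_zero, tEp2_mk_one]
  simp only [Pi.single_apply, right_iff, up_iff, add_mul, ite_mul, one_mul, zero_mul,
    Finset.sum_add_distrib, Finset.sum_ite_eq, Finset.mem_univ, if_true]
  ring

variable [Fact (1 < L)]

lemma vertexDegree_eq_sum (J : TE L → ZMod 2) (v : TV L) :
    vertexDegree J v = ∑ e, incidence v e * (J e).val := by
  have val_eq_ite : ∀ b : ZMod 2, b.val = if b ≠ 0 then 1 else 0 := by decide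
  rw [vertexDegree, Finset.card_filter]
  refine Finset.sum_congr rfl fun e _ => ?_
  rw [incidence_eq_ite, val_eq_ite, ite_zero_mul_ite_zero, mul_one]
  simp only [and_comm]

lemma vertexDegree_eq_add (J : TE L → ZMod 2) (v : TV L) :
    vertexDegree J v = (J (v, 0)).val + (J ((v.1 - 1, v.2), 0)).val + (J (v, 1)).val
      + (J ((v.1, v.2 - 1), 1)).val := by
  rw [vertexDegree_eq_sum, sum_incidence_mul fun e => (J e).val]

lemma vertexDegree_add_ind (J : TE L → ZMod 2) (B : Finset (TE L)) (v : TV L) :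
    (vertexDegree (J + ind B) v : ℤ) =
      vertexDegree J v + ∑ e ∈ B, incidence v e * bitSign (J e) := by
  simpa only [vertexDegree_eq_sum, Nat.cast_sum, Nat.cast_mul] using
    sum_mul_val_add_ind (fun e => (incidence v e : ℤ)) J B

lemma tD1_apply (J : TE L → ZMod 2) (v : TV L) :
    tD1 L J v = ∑ e, (incidence v e : ZMod 2) * J e := by
  simp [tD1, Matrix.mulVec, dotProduct, tM1, incidence_eq_ite]

lemma tD1_eq_vertexDegree (J : TE L → ZMod 2) (v : TV L) :
    tD1 L J v = (vertexDegree J v : ZMod 2) := by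
  simp [tD1_apply, vertexDegree_eq_sum]

lemma tD1_single (e : TE L) :
    tD1 L (Pi.single e 1) = Pi.single (tEp1 e) 1 + Pi.single (tEp2 e) 1 := by
  ext v
  simp [tD1_apply, incidence, Pi.single_apply]

variable {D : Finset (TV L)} {J : TE L → ZMod 2}

lemma odd_vertexDegree_iff (hJ : tD1 L J = ind D) (v : TV L) :
    Odd (vertexDegree J v) ↔ v ∈ D := by
  rw [← ZMod.natCast_eq_one_iff_odd, ← tD1_eq_vertexDegree, hJ]
  simp [ind]

lemma vertexDegree_eq_three_of_ne_one (hJ : tD1 L J = ind D) {v : TV L} (hv : v ∈ D)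
    (hne : vertexDegree J v ≠ 1) : vertexDegree J v = 3 := by
  have val_lt (e : TE L) : (J e).val < 2 := ZMod.val_lt _
  have hle : vertexDegree J v ≤ 4 := by
    have := val_lt (v, 0)
    have := val_lt ((v.1 - 1, v.2), 0)
    have := val_lt (v, 1)
    have := val_lt ((v.1, v.2 - 1), 1)
    rw [vertexDegree_eq_add]
    omega
  obtain ⟨n, hn⟩ := (odd_vertexDegree_iff hJ v).2 hv
  omega

end Incidence

section Plaquettes

variable {L : ℕ}

/-- The four boundary edges of a plaquette. -/
def plaquetteEdges (p : TP L) : Finset (TE L) :=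
  {(p, 0), (p, 1), ((p.1, p.2 + 1), 0), ((p.1 + 1, p.2), 1)}

lemma tD2_single [NeZero L] (p : TP L) : tD2 L (Pi.single p 1) = ind (plaquetteEdges p) := by
  ext e
  simp [tD2, tM2, ind, plaquetteEdges]

variable [Fact (1 < L)]

lemma sum_plaquetteEdges {M : Type*} [AddCommMonoid M] (f : TE L → M) (p : TP L) :
    ∑ e ∈ plaquetteEdges p, f e =
      f (p, 0) + f (p, 1) + f ((p.1, p.2 + 1), 0) + f ((p.1 + 1, p.2), 1) := by
  unfold plaquetteEdges
  rw [Finset.sum_insert, Finset.sum_insert, Finset.sum_insert, Finset.sum_singleton]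
  · simp only [add_assoc]
  all_goals simp [Prod.ext_iff]

variable [NeZero L]

lemma tD1_tD2_single (p : TP L) : tD1 L (tD2 L (Pi.single p 1)) = 0 := by
  have even_incidence (v : TV L) : Even (∑ e ∈ plaquetteEdges p, incidence v e) := by
    rw [sum_plaquetteEdges]
    exact ⟨(Pi.single p 1 + Pi.single (p.1 + 1, p.2) 1 + Pi.single (p.1, p.2 + 1) 1
      + Pi.single (p.1 + 1, p.2 + 1) 1 : TV L → ℕ) v, by
        simp only [incidence, Pi.add_apply, tEp1_mk, tEp2_mk_zero, tEp2_mk_one]; ring⟩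
  ext v
  rw [tD2_single, tD1_apply]
  simpa [ind] using (ZMod.natCast_eq_zero_iff_even).2 (even_incidence v)

lemma tD1_tD2 (c : TP L → ZMod 2) : tD1 L (tD2 L c) = 0 := by
  have hcomp : tD1 L ∘ₗ tD2 L = 0 := by
    refine LinearMap.pi_ext' fun p => LinearMap.ext_ring ?_
    simpa using tD1_tD2_single p
  exact LinearMap.congr_fun hcomp c

end Plaquettes

section Helix

/-- A Hamiltonian cycle of the torus, of period `L * L`: each of the `L` horizontal laps makes
`L - 1` steps to the right and one step up. -/
def helix (L k : ℕ) : TV L := ((k : ZMod L) - ((k / L : ℕ) : ZMod L), ((k / L : ℕ) : ZMod L))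

/-- The edge of the Hamiltonian cycle `helix` from its `k`-th to its `(k + 1)`-st vertex. -/
def helixEdge (L k : ℕ) : TE L := (helix L k, if L ∣ k + 1 then 1 else 0)

variable {L : ℕ}

lemma tEp2_helixEdge (k : ℕ) : tEp2 (helixEdge L k) = helix L (k + 1) := by
  by_cases h : L ∣ k + 1
  · simp [helixEdge, helix, Nat.succ_div, h]
  · simp [helixEdge, helix, Nat.succ_div, h, sub_add_eq_add_sub]

lemma helix_mul_self : helix L (L * L) = helix L 0 := by
  rcases L.eq_zero_or_pos with rfl | hL
  · rfl
  · simp [helix, hL]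

lemma helix_injOn : Set.InjOn (helix L) (Finset.range (L * L)) := by
  intro a ha b hb hab
  simp only [Finset.coe_range, Set.mem_Iio] at ha hb
  obtain ⟨hmod, hdiv⟩ := Prod.mk.inj hab
  rw [hdiv, sub_left_inj, ZMod.natCast_eq_natCast_iff'] at hmod
  rw [ZMod.natCast_eq_natCast_iff', Nat.mod_eq_of_lt (Nat.div_lt_of_lt_mul ha),
    Nat.mod_eq_of_lt (Nat.div_lt_of_lt_mul hb)] at hdiv
  rw [← Nat.div_add_mod a L, ← Nat.div_add_mod b L, hmod, hdiv]

variable [NeZero L]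

lemma sum_helix {M : Type*} [AddCommMonoid M] (g : TV L → M) :
    ∑ k ∈ Finset.range (L * L), g (helix L k) = ∑ v, g v := by
  have himage : (Finset.range (L * L)).image (helix L) = Finset.univ := by
    apply Finset.eq_univ_of_card
    simp [Finset.card_image_of_injOn helix_injOn, ZMod.card]
  rw [← himage, Finset.sum_image helix_injOn]

/-- The chain supported on the cycle `helix` whose coefficient on the `k`-th edge is `T (k + 1)`. -/
def helixChain (T : ℕ → ZMod 2) : TE L → ZMod 2 :=
  ∑ k ∈ Finset.range (L * L), T (k + 1) • Pi.single (helixEdge L k) 1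

variable [Fact (1 < L)]

lemma tD1_helixChain (T : ℕ → ZMod 2) (hT : T (L * L) = T 0) :
    tD1 L (helixChain T) =
      ∑ k ∈ Finset.range (L * L), (T (k + 1) - T k) • Pi.single (helix L k) 1 := by
  let F (k : ℕ) : TV L → ZMod 2 := T k • Pi.single (helix L k) 1
  have telescope : ∑ k ∈ Finset.range (L * L), (F (k + 1) - F k) = 0 := by
    rw [Finset.sum_range_sub]
    simp [F, hT, helix_mul_self]
  rw [helixChain, map_sum, ← sub_eq_zero, ← Finset.sum_sub_distrib, ← telescope]
  refine Finset.sum_congr rfl fun k _ => ?_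
  rw [map_smul, tD1_single, tEp2_helixEdge]
  calc T (k + 1) • (Pi.single (helix L k) 1 + Pi.single (helix L (k + 1)) 1)
        - (T (k + 1) - T k) • Pi.single (helix L k) 1
      = F (k + 1) + F k := by simp only [F]; module
    _ = F (k + 1) - F k := (ZModModule.sub_eq_add _ _).symm

lemma exists_tD1_eq_ind_two_mul_wt_le {D : Finset (TV L)} (hD : Even D.card) :
    ∃ K : TE L → ZMod 2, tD1 L K = ind D ∧ 2 * wt K ≤ L * L := by
  let T (k : ℕ) : ZMod 2 := ∑ m ∈ Finset.range k, ind D (helix L m)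
  have hT : T (L * L) = T 0 := by
    have hcard : (D.card : ZMod 2) = 0 := (ZMod.natCast_eq_zero_iff_even).2 hD
    simp only [T, sum_helix, Finset.range_zero, Finset.sum_empty]
    simpa [ind] using hcard
  have boundary (b : ZMod 2) : tD1 L (helixChain fun k => T k + b) = ind D := by
    rw [tD1_helixChain _ (by rw [hT])]
    simp only [add_sub_add_right_eq_sub, T, Finset.sum_range_succ_sub_sum]
    rw [sum_helix fun v => ind D v • Pi.single v (1 : ZMod 2)]
    exact (pi_eq_sum_univ' (ind D)).symm
  have hsum : wt (helixChain fun k => T k + 0 : TE L → ZMod 2)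
      + wt (helixChain fun k => T k + 1 : TE L → ZMod 2) ≤ L * L := by
    have add_one_ne_zero_iff : ∀ b : ZMod 2, b + 1 ≠ 0 ↔ ¬b + 0 ≠ 0 := by decide
    refine (add_le_add (wt_sum_smul_single_le _ _ _) (wt_sum_smul_single_le _ _ _)).trans_eq ?_
    simp only [add_one_ne_zero_iff]
    rw [Finset.card_filter_add_card_filter_not, Finset.card_range]
  rcases le_total (wt (helixChain fun k => T k + 0 : TE L → ZMod 2))
    (wt (helixChain fun k => T k + 1 : TE L → ZMod 2)) with h | h
  · exact ⟨_, boundary 0, by omega⟩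
  · exact ⟨_, boundary 1, by omega⟩

end Helix

section Checkerboard

variable {L : ℕ}

/-- A sign pattern on `ZMod L` that changes sign at every step. Two such patterns `c`, `q`, for the
columns and the rows, describe a checkerboard colouring of the torus. -/
def Alternating (c : ZMod L → ℤˣ) : Prop := ∀ i, c (i + 1) = -c i

lemma Alternating.sub_one {c : ZMod L → ℤˣ} (hc : Alternating c) (i : ZMod L) :
    c (i - 1) = -c i := by
  rw [← neg_eq_iff_eq_neg, ← hc, sub_add_cancel]

lemma exists_alternating_eq (hL : Even L) (i : ZMod L) (s : ℤˣ) :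
    ∃ c : ZMod L → ℤˣ, Alternating c ∧ c i = s := by
  let sign (a : ZMod 2) : ℤˣ := if a = 0 then 1 else -1
  have sign_add_one : ∀ a, sign (a + 1) = -sign a := by decide
  let parity := ZMod.castHom hL.two_dvd (ZMod 2)
  refine ⟨fun j => s * sign (parity i) * sign (parity j), fun j => ?_, ?_⟩
  · simp only [map_add, map_one, sign_add_one, mul_neg]
  · simp only
    rw [mul_assoc, Int.units_mul_self, mul_one]

variable [NeZero L]

/-- One colour class of the checkerboard colouring given by the column signs `c` and the row
signs `q`. -/
def checkerboard (c q : ZMod L → ℤˣ) : Finset (TV L) :=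
  Finset.univ.filter fun v => c v.1 = q v.2

lemma mem_checkerboard {c q : ZMod L → ℤˣ} {v : TV L} : v ∈ checkerboard c q ↔ c v.1 = q v.2 :=
  Finset.mem_filter_univ v

variable {c q : ZMod L → ℤˣ}

lemma tEp2_mem_checkerboard (hc : Alternating c) (hq : Alternating q) (e : TE L) :
    tEp2 e ∈ checkerboard c q ↔ tEp1 e ∉ checkerboard c q := by
  obtain ⟨⟨x, y⟩, k⟩ := e
  have neg_left : ∀ a b : ℤˣ, -a = b ↔ a ≠ b := by decide
  have neg_right : ∀ a b : ℤˣ, a = -b ↔ a ≠ b := by decide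
  fin_cases k
  · simp [mem_checkerboard, hc x, neg_left]
  · simp [mem_checkerboard, hq y, neg_right]

lemma sum_checkerboard_vertexDegree [Fact (1 < L)] (hc : Alternating c) (hq : Alternating q)
    (J : TE L → ZMod 2) : ∑ v ∈ checkerboard c q, vertexDegree J v = wt J := by
  have sum_incidence (e : TE L) : ∑ v ∈ checkerboard c q, incidence v e = 1 := by
    simp only [incidence, Pi.add_apply, Finset.sum_add_distrib, Finset.sum_pi_single',
      tEp2_mem_checkerboard hc hq]
    by_cases h : tEp1 e ∈ checkerboard c q <;> simp [h]
  simp only [vertexDegree_eq_sum, wt_eq_sum_val]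
  rw [Finset.sum_comm]
  simp only [← Finset.sum_mul, sum_incidence, one_mul]

lemma two_mul_card_checkerboard (hc : Alternating c) (hq : Alternating q) :
    2 * (checkerboard c q).card = L * L := by
  have shift_mem (v : TV L) : v ∈ (checkerboard c q)ᶜ ↔ v + (1, 0) ∈ checkerboard c q := by
    rw [Finset.mem_compl]
    simpa [Prod.add_def] using (tEp2_mem_checkerboard hc hq (v, 0)).symm
  have card_compl : (checkerboard c q)ᶜ.card = (checkerboard c q).card :=
    Finset.card_equiv (Equiv.addRight (1, 0)) shift_mem
  have := Finset.card_add_card_compl (checkerboard c q)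
  rw [card_compl, Fintype.card_prod, ZMod.card] at this
  omega

lemma mul_self_lt_two_mul_wt_of_checkerboard_subset [Fact (1 < L)] (hc : Alternating c)
    (hq : Alternating q) {D : Finset (TV L)} {J : TE L → ZMod 2} (hJ : tD1 L J = ind D)
    (hD : checkerboard c q ⊆ D) {v : TV L} (hv : v ∈ checkerboard c q)
    (hne : vertexDegree J v ≠ 1) : L * L < 2 * wt J := by
  have degree_pos : ∀ w ∈ checkerboard c q, 1 ≤ vertexDegree J w := fun w hw =>
    ((odd_vertexDegree_iff hJ w).2 (hD hw)).pos
  have hlt : ∑ w ∈ checkerboard c q, 1 < ∑ w ∈ checkerboard c q, vertexDegree J w :=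
    Finset.sum_lt_sum degree_pos ⟨v, hv, (degree_pos v hv).lt_of_ne' hne⟩
  rw [sum_checkerboard_vertexDegree hc hq, Finset.sum_const, smul_eq_mul, mul_one] at hlt
  rw [← two_mul_card_checkerboard hc hq]
  omega

end Checkerboard

section Flips

variable {L : ℕ}

/-- The corner of the plaquette `p` towards which a flip of `p` moves edges: the sign of the row
gives its horizontal direction, that of the column its vertical one. -/
def plaquetteHead (c q : ZMod L → ℤˣ) (p : TP L) : TV L :=
  (if q p.2 = 1 then p.1 + 1 else p.1, if c p.1 = 1 then p.2 + 1 else p.2)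

/-- The corner of the plaquette `p` opposite to `plaquetteHead`, away from which a flip of `p`
moves edges. -/
def plaquetteTail (c q : ZMod L → ℤˣ) (p : TP L) : TV L :=
  (if q p.2 = 1 then p.1 else p.1 + 1, if c p.1 = 1 then p.2 else p.2 + 1)

/-- The chain `J` contains the two boundary edges of `p` at the tail of `p` and neither of the two
at its head, so that adding the boundary of `p` moves both edges from the tail to the head. -/
def IsFlippable (c q : ZMod L → ℤˣ) (J : TE L → ZMod 2) (p : TP L) : Prop :=
  J ((p.1, (plaquetteTail c q p).2), 0) = 1 ∧ J (((plaquetteTail c q p).1, p.2), 1) = 1 ∧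
  J ((p.1, (plaquetteHead c q p).2), 0) = 0 ∧ J (((plaquetteHead c q p).1, p.2), 1) = 0

variable {c q : ZMod L → ℤˣ}

lemma IsFlippable.bitSign_eq {J : TE L → ZMod 2} {p : TP L} (h : IsFlippable c q J p) :
    bitSign (J (p, 0)) = -c p.1 ∧ bitSign (J ((p.1, p.2 + 1), 0)) = c p.1 ∧
    bitSign (J (p, 1)) = -q p.2 ∧ bitSign (J ((p.1 + 1, p.2), 1)) = q p.2 := by
  have bitSign_zero : bitSign 0 = 1 := by decide
  have bitSign_one : bitSign 1 = -1 := by decide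
  obtain ⟨i, j⟩ := p
  obtain ⟨h₁, h₂, h₃, h₄⟩ := h
  rcases Int.units_eq_one_or (c i) with hc | hc <;>
  rcases Int.units_eq_one_or (q j) with hq | hq <;>
  simp_all [plaquetteHead, plaquetteTail]

lemma plaquetteTail_ne_plaquetteHead [Fact (1 < L)] (p : TP L) :
    plaquetteTail c q p ≠ plaquetteHead c q p := by
  intro h
  have := congrArg Prod.fst h
  simp only [plaquetteTail, plaquetteHead] at this
  split_ifs at this <;> simp at this

lemma exists_plaquetteHead_eq (hq : Alternating q) {u : TV L} (hu : c u.1 = q u.2) :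
    ∃ p, plaquetteHead c q p = u := by
  obtain ⟨x, y⟩ := u
  rcases Int.units_eq_one_or (c x) with h | h
  · have hy : q (y - 1) = -1 := by rw [hq.sub_one, ← hu, h]
    exact ⟨(x, y - 1), by simp [plaquetteHead, h, hy]⟩
  · have hy : q y = -1 := by rw [← hu, h]
    exact ⟨(x, y), by simp [plaquetteHead, h, hy]⟩

variable [NeZero L]

lemma plaquetteHead_mem_checkerboard (hc : Alternating c) (hq : Alternating q) (p : TP L) :
    plaquetteHead c q p ∈ checkerboard c q := by
  rw [mem_checkerboard]
  rcases Int.units_eq_one_or (c p.1) with h | h <;>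
  rcases Int.units_eq_one_or (q p.2) with h' | h' <;>
  simp [plaquetteHead, h, h', hc p.1, hq p.2]

variable [Fact (1 < L)] {J : TE L → ZMod 2}

lemma wt_add_tD2_single (J : TE L → ZMod 2) (p : TP L) :
    (wt (J + tD2 L (Pi.single p 1)) : ℤ) = wt J + (bitSign (J (p, 0)) + bitSign (J (p, 1))
      + bitSign (J ((p.1, p.2 + 1), 0)) + bitSign (J ((p.1 + 1, p.2), 1))) := by
  rw [tD2_single, wt_add_ind, sum_plaquetteEdges]

lemma IsFlippable.wt_eq {p : TP L} (h : IsFlippable c q J p) :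
    wt (J + tD2 L (Pi.single p 1)) = wt J := by
  obtain ⟨h₁, h₂, h₃, h₄⟩ := h.bitSign_eq
  zify
  rw [wt_add_tD2_single, h₁, h₂, h₃, h₄]
  ring

lemma IsFlippable.vertexDegree_eq {p : TP L} (h : IsFlippable c q J p) (v : TV L) :
    (vertexDegree (J + tD2 L (Pi.single p 1)) v : ℤ) = vertexDegree J v
      + (2 * if v = plaquetteHead c q p then 1 else 0)
      - 2 * if v = plaquetteTail c q p then 1 else 0 := by
  obtain ⟨i, j⟩ := p
  obtain ⟨h₁, h₂, h₃, h₄⟩ := h.bitSign_eq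
  rw [tD2_single, vertexDegree_add_ind, sum_plaquetteEdges, h₁, h₂, h₃, h₄]
  simp only [incidence, Pi.add_apply, tEp1_mk, tEp2_mk_zero, tEp2_mk_one]
  rcases Int.units_eq_one_or (c i) with hc | hc <;>
  rcases Int.units_eq_one_or (q j) with hq | hq <;>
  simp only [plaquetteHead, plaquetteTail, hc, hq, Pi.single_apply, neg_units_ne_self, if_true,
    if_false, Units.val_one, Units.val_neg, Nat.cast_add, Nat.cast_ite, Nat.cast_one,
    Nat.cast_zero] <;> ring

lemma isFlippable_of_wt_le {p : TP L} (hwt : wt J ≤ wt (J + tD2 L (Pi.single p 1)))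
    (hhor : J ((p.1, (plaquetteTail c q p).2), 0) = 1)
    (hver : J (((plaquetteTail c q p).1, p.2), 1) = 1) : IsFlippable c q J p := by
  have bitSign_one : bitSign 1 = -1 := by decide
  have eq_zero_of_sum : ∀ a b : ZMod 2, 2 ≤ bitSign a + bitSign b → a = 0 ∧ b = 0 := by decide
  obtain ⟨i, j⟩ := p
  zify at hwt
  rw [wt_add_tD2_single] at hwt
  refine ⟨hhor, hver, eq_zero_of_sum _ _ ?_⟩
  rcases Int.units_eq_one_or (c i) with hc | hc <;>
  rcases Int.units_eq_one_or (q j) with hq | hq <;>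
  simp only [plaquetteHead, plaquetteTail, hc, hq, if_true, neg_units_ne_self, if_false] at * <;>
  rw [hhor, hver, bitSign_one] at hwt <;> linarith

-- Three edges at `v` fill exactly one of any two opposite corners, and the two plaquettes with
-- tail `v` sit at opposite corners.
lemma exists_isFlippable_tail_eq (hc : Alternating c) (hq : Alternating q)
    (hwt : ∀ p, wt J ≤ wt (J + tD2 L (Pi.single p 1))) {v : TV L}
    (hv : v ∈ checkerboard c q) (hdeg : vertexDegree J v = 3) :
    ∃ p, IsFlippable c q J p ∧ plaquetteTail c q p = v := by
  have opposite_corners : ∀ r l u d : ZMod 2, r.val + l.val + u.val + d.val = 3 →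
      (r = 1 ∧ u = 1 ∨ l = 1 ∧ d = 1) ∧ (l = 1 ∧ u = 1 ∨ r = 1 ∧ d = 1) := by decide
  obtain ⟨x, y⟩ := v
  rw [vertexDegree_eq_add] at hdeg
  rw [mem_checkerboard] at hv
  suffices ∃ p, plaquetteTail c q p = (x, y) ∧ J ((p.1, y), 0) = 1 ∧ J ((x, p.2), 1) = 1 by
    obtain ⟨p, htail, hhor, hver⟩ := this
    exact ⟨p, isFlippable_of_wt_le (hwt p) (by rw [htail, hhor]) (by rw [htail, hver]), htail⟩
  obtain ⟨hdiag, hanti⟩ := opposite_corners _ _ _ _ hdeg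
  rcases Int.units_eq_one_or (c x) with h | h
  · have hy : q y = 1 := hv ▸ h
    rcases hdiag with hcorner | hcorner
    · exact ⟨(x, y), by simp [plaquetteTail, h, hy], hcorner⟩
    · exact ⟨(x - 1, y - 1), by simp [plaquetteTail, hc.sub_one, hq.sub_one, h, hy], hcorner⟩
  · have hy : q y = -1 := hv ▸ h
    rcases hanti with hcorner | hcorner
    · exact ⟨(x - 1, y), by simp [plaquetteTail, hc.sub_one, h, hy], hcorner⟩
    · exact ⟨(x, y - 1), by simp [plaquetteTail, hq.sub_one, h, hy], hcorner⟩

end Flips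

section Heights

variable {L : ℕ} {c q : ZMod L → ℤˣ}

/-- `h` records how many times each plaquette is flipped on the way from `J` to `J'`: the sign of
an edge changes by twice the oriented difference of `h` across that edge. -/
def IsHeightFunction (c q : ZMod L → ℤˣ) (J J' : TE L → ZMod 2) (h : TP L → ℤ) : Prop :=
  ∀ x y,
    bitSign (J' ((x, y + 1), 0)) =
      bitSign (J ((x, y + 1), 0)) + 2 * c x * (h (x, y + 1) - h (x, y)) ∧
    bitSign (J' ((x + 1, y), 1)) =
      bitSign (J ((x + 1, y), 1)) + 2 * q y * (h (x + 1, y) - h (x, y))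

lemma IsHeightFunction.add {J J' J'' : TE L → ZMod 2} {h h' : TP L → ℤ}
    (hJ : IsHeightFunction c q J J' h) (hJ' : IsHeightFunction c q J' J'' h') :
    IsHeightFunction c q J J'' (h + h') := fun x y => by
  simp only [Pi.add_apply]
  constructor
  · linear_combination (hJ x y).1 + (hJ' x y).1
  · linear_combination (hJ x y).2 + (hJ' x y).2

lemma IsHeightFunction.eq_of_self [NeZero L] {J : TE L → ZMod 2} {h : TP L → ℤ}
    (hJ : IsHeightFunction c q J J h) (v w : TP L) : h v = h w := by
  have periodic_snd (x : ZMod L) : Function.Periodic (fun y => h (x, y)) 1 := fun y => by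
    simpa [sub_eq_zero] using (hJ x y).1
  have periodic_fst (y : ZMod L) : Function.Periodic (fun x => h (x, y)) 1 := fun x => by
    simpa [sub_eq_zero] using (hJ x y).2
  have eq_zero_of_periodic {f : ZMod L → ℤ} (hf : Function.Periodic f 1) (x : ZMod L) :
      f x = f 0 := by
    simpa using hf.nat_mul_eq x.val
  have eq_origin (u : TP L) : h u = h (0, 0) :=
    (eq_zero_of_periodic (periodic_snd u.1) u.2).trans
      (eq_zero_of_periodic (periodic_fst 0) u.1)
  rw [eq_origin v, eq_origin w]

lemma IsFlippable.isHeightFunction_single [NeZero L] [Fact (1 < L)] {J : TE L → ZMod 2}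
    {p : TP L} (hp : IsFlippable c q J p) :
    IsHeightFunction c q J (J + tD2 L (Pi.single p 1)) (Pi.single p 1) := by
  obtain ⟨i, j⟩ := p
  obtain ⟨h₁, h₂, h₃, h₄⟩ := hp.bitSign_eq
  intro x y
  simp only [tD2_single, bitSign_add_ind, plaquetteEdges, Finset.mem_insert,
    Finset.mem_singleton, Prod.mk.injEq, Pi.single_apply]
  constructor
  · by_cases hx : x = i <;> by_cases hy : y = j <;> by_cases hy' : y + 1 = j <;> grind
  · by_cases hx : x = i <;> by_cases hx' : x + 1 = i <;> by_cases hy : y = j <;> grind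

/-- `J'` arises from `J` by raising heights, at least one of them, while keeping the height of the
plaquette `p₀` fixed. The order of the arguments makes raising a descent of this relation. -/
def IsRaising (c q : ZMod L → ℤˣ) [NeZero L] (p₀ : TP L) (J' J : TE L → ZMod 2) : Prop :=
  ∃ h : TP L → ℤ, h p₀ = 0 ∧ 0 < ∑ p, h p ∧ IsHeightFunction c q J J' h

variable [NeZero L]

-- A cycle of this relation would have a constant height function, hence zero, as it vanishes at
-- `p₀`.
lemma wellFounded_isRaising (p₀ : TP L) : WellFounded (IsRaising c q p₀) := by
  have : IsTrans _ (IsRaising c q p₀) := ⟨by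
    rintro J'' J' J ⟨h', hp', hpos', hJ'⟩ ⟨h, hp, hpos, hJ⟩
    refine ⟨h + h', by simp [hp, hp'], ?_, hJ.add hJ'⟩
    simpa [Finset.sum_add_distrib] using add_pos hpos hpos'⟩
  have : Std.Irrefl (IsRaising c q p₀) := ⟨by
    rintro J ⟨h, hp, hpos, hJ⟩
    simp [hJ.eq_of_self _ p₀, hp] at hpos⟩
  exact Finite.wellFounded_of_trans_of_irrefl _

lemma IsFlippable.isRaising [Fact (1 < L)] {J : TE L → ZMod 2} {p p₀ : TP L}
    (hp : IsFlippable c q J p) (hne : p ≠ p₀) :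
    IsRaising c q p₀ (J + tD2 L (Pi.single p 1)) J :=
  ⟨Pi.single p 1, Pi.single_eq_of_ne' hne 1, by simp, hp.isHeightFunction_single⟩

end Heights

section Reduction

variable {L : ℕ} [NeZero L]

/-- The vertices of `D` that are not incident to exactly one edge of the chain `J`. -/
def defects (D : Finset (TV L)) (J : TE L → ZMod 2) : Finset (TV L) :=
  D.filter fun v => vertexDegree J v ≠ 1

/-- The chain `J` has lexicographically least weight and number of defects among all chains
homologous to it. -/
def IsLexMinimal (D : Finset (TV L)) (J : TE L → ZMod 2) : Prop :=
  ∀ a : TP L → ZMod 2,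
    toLex (wt J, (defects D J).card) ≤
      toLex (wt (J + tD2 L a), (defects D (J + tD2 L a)).card)

variable {D : Finset (TV L)} {J : TE L → ZMod 2}

lemma exists_isLexMinimal_add_tD2 (D : Finset (TV L)) (J : TE L → ZMod 2) :
    ∃ a, IsLexMinimal D (J + tD2 L a) := by
  obtain ⟨a, ha⟩ := Finite.exists_min fun a : TP L → ZMod 2 =>
    toLex (wt (J + tD2 L a), (defects D (J + tD2 L a)).card)
  exact ⟨a, fun b => by simpa only [add_assoc, ← map_add] using ha (a + b)⟩

lemma IsLexMinimal.wt_le (h : IsLexMinimal D J) (a : TP L → ZMod 2) : wt J ≤ wt (J + tD2 L a) :=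
  (Prod.Lex.toLex_le_toLex'.1 (h a)).1

lemma IsLexMinimal.card_defects_le (h : IsLexMinimal D J) {a : TP L → ZMod 2}
    (hwt : wt (J + tD2 L a) = wt J) : (defects D J).card ≤ (defects D (J + tD2 L a)).card :=
  (Prod.Lex.toLex_le_toLex'.1 (h a)).2 hwt.symm

lemma IsLexMinimal.add_tD2 (h : IsLexMinimal D J) {a : TP L → ZMod 2}
    (hwt : wt (J + tD2 L a) = wt J)
    (hcard : (defects D (J + tD2 L a)).card ≤ (defects D J).card) :
    IsLexMinimal D (J + tD2 L a) := fun b => by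
  rw [hwt, hcard.antisymm (h.card_defects_le hwt), add_assoc, ← map_add]
  exact h (a + b)

variable [Fact (1 < L)] {c q : ZMod L → ℤˣ}

lemma IsFlippable.defects_subset {p : TP L} (hp : IsFlippable c q J p)
    (hdeg : vertexDegree J (plaquetteTail c q p) = 3) :
    defects D (J + tD2 L (Pi.single p 1)) ⊆
      insert (plaquetteHead c q p) ((defects D J).erase (plaquetteTail c q p)) := by
  intro w hw
  have hdegree := hp.vertexDegree_eq w
  have hne := plaquetteTail_ne_plaquetteHead (c := c) (q := q) p
  simp only [defects, Finset.mem_insert, Finset.mem_erase, Finset.mem_filter] at hw ⊢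
  by_contra! hcon
  obtain ⟨hhead, hrest⟩ := hcon
  rw [if_neg hhead] at hdegree
  by_cases htail : w = plaquetteTail c q p
  · rw [if_pos htail, htail, hdeg, ← htail] at hdegree
    omega
  · rw [if_neg htail] at hdegree
    have := hrest htail hw.1
    omega

lemma IsLexMinimal.exists_flip (hlex : IsLexMinimal D J) (hJ : tD1 L J = ind D) (hc : Alternating c)
    (hq : Alternating q) {v : TV L} (hv : v ∈ checkerboard c q) (hdef : v ∈ defects D J) :
    ∃ p, IsFlippable c q J p ∧ IsLexMinimal D (J + tD2 L (Pi.single p 1)) ∧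
      plaquetteHead c q p ∈ defects D (J + tD2 L (Pi.single p 1)) := by
  have hdeg : vertexDegree J v = 3 := by
    obtain ⟨hvD, hne⟩ := Finset.mem_filter.1 hdef
    exact vertexDegree_eq_three_of_ne_one hJ hvD hne
  obtain ⟨p, hp, rfl⟩ :=
    exists_isFlippable_tail_eq hc hq (fun p => hlex.wt_le (Pi.single p 1)) hv hdeg
  have hsub := hp.defects_subset (D := D) hdeg
  have hcard := Finset.card_erase_add_one hdef
  refine ⟨p, hp, hlex.add_tD2 hp.wt_eq ?_, ?_⟩
  · exact ((Finset.card_le_card hsub).trans (Finset.card_insert_le _ _)).trans_eq hcard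
  · by_contra hhead
    have hlt := Finset.card_le_card ((Finset.subset_insert_iff_of_notMem hhead).1 hsub)
    have := hlex.card_defects_le hp.wt_eq
    omega

lemma IsLexMinimal.checkerboard_subset (hlex : IsLexMinimal D J) (hJ : tD1 L J = ind D)
    (hc : Alternating c) (hq : Alternating q) {v : TV L} (hv : v ∈ checkerboard c q)
    (hdef : v ∈ defects D J) : checkerboard c q ⊆ D := by
  intro u hu
  by_contra huD
  obtain ⟨p₀, rfl⟩ := exists_plaquetteHead_eq hq (mem_checkerboard.1 hu)
  let P : Set (TE L → ZMod 2) :=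
    {K | IsLexMinimal D K ∧ tD1 L K = ind D ∧ ∃ w ∈ checkerboard c q, w ∈ defects D K}
  obtain ⟨K, ⟨hKlex, hK, w, hw, hwdef⟩, hmin⟩ :=
    (wellFounded_isRaising (c := c) (q := q) p₀).has_min P ⟨J, hlex, hJ, v, hv, hdef⟩
  obtain ⟨p, hp, hplex, hhead⟩ := hKlex.exists_flip hK hc hq hw hwdef
  have hne : p ≠ p₀ := by
    rintro rfl
    exact huD (Finset.mem_filter.1 hhead).1
  refine hmin _ ⟨hplex, ?_, _, plaquetteHead_mem_checkerboard hc hq p, hhead⟩ (hp.isRaising hne)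
  rw [map_add, tD1_tD2, add_zero, hK]

lemma IsLexMinimal.defects_eq_empty (hlex : IsLexMinimal D J) (hJ : tD1 L J = ind D) (hL : Even L)
    (hwt : 2 * wt J ≤ L * L) : defects D J = ∅ := by
  refine Finset.eq_empty_of_forall_notMem fun v hdef => ?_
  obtain ⟨c, hc, -⟩ := exists_alternating_eq hL v.1 1
  obtain ⟨q, hq, hqv⟩ := exists_alternating_eq hL v.2 (c v.1)
  have hv : v ∈ checkerboard c q := mem_checkerboard.2 hqv.symm
  have hsub := hlex.checkerboard_subset hJ hc hq hv hdef
  exact hwt.not_gt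
    (mul_self_lt_two_mul_wt_of_checkerboard_subset hc hq hJ hsub hv (Finset.mem_filter.1 hdef).2)

end Reduction

/-- **Dissolving degree-3 defects in the toric code.**
If `L ≥ 4` is even, `D` is an even-cardinality set of vertices, and `J` is a minimum
Hamming-weight solution of `∂₁ J = 𝟙_D`, then there is a `2`-chain `c` such that
`J' = J + ∂₂ c` has the same weight, the same boundary `𝟙_D`, and every vertex of `D`
is an endpoint of exactly one edge of the support of `J'`. -/
theorem toric_degree3_defect_resolution
    (L : ℕ) [NeZero L] (hL : 4 ≤ L) (hLeven : Even L)
    (D : Finset (TV L)) (hD : Even D.card)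
    (J : TE L → ZMod 2)
    (hJ : tD1 L J = ind D)
    (hmin : ∀ K : TE L → ZMod 2, tD1 L K = ind D → wt J ≤ wt K) :
    ∃ c : TP L → ZMod 2,
      wt (J + tD2 L c) = wt J ∧
      tD1 L (J + tD2 L c) = ind D ∧
      ∀ v ∈ D,
        (Finset.univ.filter
          (fun e : TE L => (J + tD2 L c) e ≠ 0 ∧ (v = tEp1 e ∨ v = tEp2 e))).card = 1 := by
  have : Fact (1 < L) := ⟨by omega⟩
  obtain ⟨a, hlex⟩ := exists_isLexMinimal_add_tD2 D J
  have hbdry : tD1 L (J + tD2 L a) = ind D := by rw [map_add, tD1_tD2, add_zero, hJ]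
  have hwt : wt (J + tD2 L a) = wt J := by
    refine le_antisymm ?_ (hmin _ hbdry)
    simpa [add_assoc, ← map_add, CharTwo.add_self_eq_zero] using hlex.wt_le a
  have hhalf : 2 * wt (J + tD2 L a) ≤ L * L := by
    obtain ⟨K, hK, hKwt⟩ := exists_tD1_eq_ind_two_mul_wt_le hD
    have := hmin K hK
    omega
  have hdefects := hlex.defects_eq_empty hbdry hLeven hhalf
  refine ⟨a, hwt, hbdry, fun v hv => ?_⟩
  by_contra hne
  exact Finset.notMem_empty v (hdefects ▸ Finset.mem_filter.2 ⟨hv, hne⟩)
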